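/- Tr(𝛉𝚯²) = ∂( (1/2) Tr(𝛉𝚯𝛉̄ − 𝛉̄𝚯𝛉) ) − (1/2) Tr(𝛉²𝚯𝛉̄ + 𝛉̄𝚯𝛉²). -/

import Mathlib

/-- An abstract model of the Dolbeault double complex of `(p,q)`-forms on a complex
manifold: a bigraded associative `ℂ`-algebra `Ω = ⨁ Ω^{p,q}`, graded-commutative with
respect to total degree, with `ℂ`-linear operators `∂` (`pd`) and `∂̄` (`pdb`) of
bidegrees `(1,0)` and `(0,1)`, squaring to zero and anticommuting, satisfying the
graded Leibniz rule. -/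
structure DolbeaultAlgebra (Ω : Type*) [Ring Ω] [Algebra ℂ Ω] where
  /-- the `ℂ`-subspace of elements of bidegree `(p,q)` -/
  deg : ℕ → ℕ → Submodule ℂ Ω
  one_mem : (1 : Ω) ∈ deg 0 0
  mul_mem : ∀ {p q p' q'} {a b : Ω}, a ∈ deg p q → b ∈ deg p' q' →
    a * b ∈ deg (p + p') (q + q')
  gcomm : ∀ {p q p' q'} (a b : Ω), a ∈ deg p q → b ∈ deg p' q' →
    a * b = ((-1 : ℂ) ^ ((p + q) * (p' + q'))) • (b * a)
  /-- the operator `∂` -/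
  pd : Ω →ₗ[ℂ] Ω
  /-- the operator `∂̄` -/
  pdb : Ω →ₗ[ℂ] Ω
  pd_mem : ∀ {p q} {a : Ω}, a ∈ deg p q → pd a ∈ deg (p + 1) q
  pdb_mem : ∀ {p q} {a : Ω}, a ∈ deg p q → pdb a ∈ deg p (q + 1)
  pd_pd : ∀ a : Ω, pd (pd a) = 0
  pdb_pdb : ∀ a : Ω, pdb (pdb a) = 0
  pd_pdb : ∀ a : Ω, pd (pdb a) + pdb (pd a) = 0
  pd_leibniz : ∀ {p q} (a b : Ω), a ∈ deg p q →
    pd (a * b) = pd a * b + ((-1 : ℂ) ^ (p + q)) • (a * pd b)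
  pdb_leibniz : ∀ {p q} (a b : Ω), a ∈ deg p q →
    pdb (a * b) = pdb a * b + ((-1 : ℂ) ^ (p + q)) • (a * pdb b)

namespace DolbeaultAlgebra

variable {Ω : Type*} [Ring Ω] [Algebra ℂ Ω] {r : ℕ}

/-- the entrywise extension of `∂` to `r × r` matrices over `Ω` -/
def mpd (A : DolbeaultAlgebra Ω) (M : Matrix (Fin r) (Fin r) Ω) :
    Matrix (Fin r) (Fin r) Ω := M.map A.pd

/-- the entrywise extension of `∂̄` to `r × r` matrices over `Ω` -/
def mpdb (A : DolbeaultAlgebra Ω) (M : Matrix (Fin r) (Fin r) Ω) :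
    Matrix (Fin r) (Fin r) Ω := M.map A.pdb

/-- the assertion that all entries of a matrix lie in `Ω^{p,q}` -/
def MatDeg (A : DolbeaultAlgebra Ω) (p q : ℕ) (M : Matrix (Fin r) (Fin r) Ω) : Prop :=
  ∀ i j, M i j ∈ A.deg p q

end DolbeaultAlgebra

variable {Ω : Type*} [Ring Ω] [Algebra ℂ Ω]

namespace DolbeaultAlgebra

variable {Ω : Type*} [Ring Ω] [Algebra ℂ Ω] {r : ℕ}

theorem MatDeg.mul' {A : DolbeaultAlgebra Ω} {p q p' q' : ℕ} {M N : Matrix (Fin r) (Fin r) Ω}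
    (hM : A.MatDeg p q M) (hN : A.MatDeg p' q' N) : A.MatDeg (p + p') (q + q') (M * N) := by
  intro i j
  rw [Matrix.mul_apply]
  exact Submodule.sum_mem _ fun k _ => A.mul_mem (hM i k) (hN k j)

theorem mpd_mul (A : DolbeaultAlgebra Ω) {p q : ℕ} {M : Matrix (Fin r) (Fin r) Ω}
    (hM : A.MatDeg p q M) (N : Matrix (Fin r) (Fin r) Ω) :
    A.mpd (M * N) = A.mpd M * N + ((-1 : ℂ) ^ (p + q)) • (M * A.mpd N) := by
  ext i j
  simp only [mpd, Matrix.map_apply, Matrix.mul_apply, Matrix.add_apply, Matrix.smul_apply, map_sum,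
    Finset.smul_sum, ← Finset.sum_add_distrib]
  exact Finset.sum_congr rfl fun k _ => A.pd_leibniz _ _ (hM i k)

theorem mpdb_mul (A : DolbeaultAlgebra Ω) {p q : ℕ} {M : Matrix (Fin r) (Fin r) Ω}
    (hM : A.MatDeg p q M) (N : Matrix (Fin r) (Fin r) Ω) :
    A.mpdb (M * N) = A.mpdb M * N + ((-1 : ℂ) ^ (p + q)) • (M * A.mpdb N) := by
  ext i j
  simp only [mpdb, Matrix.map_apply, Matrix.mul_apply, Matrix.add_apply, Matrix.smul_apply, map_sum,
    Finset.smul_sum, ← Finset.sum_add_distrib]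
  exact Finset.sum_congr rfl fun k _ => A.pdb_leibniz _ _ (hM i k)

theorem trace_mul_gcomm (A : DolbeaultAlgebra Ω) {p q p' q' : ℕ}
    {M N : Matrix (Fin r) (Fin r) Ω} (hM : A.MatDeg p q M) (hN : A.MatDeg p' q' N) :
    Matrix.trace (M * N) = ((-1 : ℂ) ^ ((p + q) * (p' + q'))) • Matrix.trace (N * M) := by
  simp only [Matrix.trace, Matrix.diag_apply, Matrix.mul_apply, Finset.smul_sum]
  rw [Finset.sum_comm]
  exact Finset.sum_congr rfl fun i _ => Finset.sum_congr rfl fun j _ =>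
    A.gcomm _ _ (hM j i) (hN i j)

theorem pd_trace (A : DolbeaultAlgebra Ω) (M : Matrix (Fin r) (Fin r) Ω) :
    A.pd (Matrix.trace M) = Matrix.trace (A.mpd M) := by
  simp [Matrix.trace, mpd]

theorem pd_one (A : DolbeaultAlgebra Ω) : A.pd 1 = 0 := by
  simpa using A.pd_leibniz 1 1 A.one_mem

theorem pdb_one (A : DolbeaultAlgebra Ω) : A.pdb 1 = 0 := by
  simpa using A.pdb_leibniz 1 1 A.one_mem

theorem mpd_one (A : DolbeaultAlgebra Ω) : A.mpd (1 : Matrix (Fin r) (Fin r) Ω) = 0 := by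
  ext i j
  by_cases hij : i = j <;> simp [mpd, Matrix.one_apply, hij, pd_one]

theorem mpdb_one (A : DolbeaultAlgebra Ω) : A.mpdb (1 : Matrix (Fin r) (Fin r) Ω) = 0 := by
  ext i j
  by_cases hij : i = j <;> simp [mpdb, Matrix.one_apply, hij, pdb_one]

theorem mpd_mpd (A : DolbeaultAlgebra Ω) (M : Matrix (Fin r) (Fin r) Ω) :
    A.mpd (A.mpd M) = 0 := by
  ext i j
  simp [mpd, A.pd_pd]

theorem mpd_mpdb (A : DolbeaultAlgebra Ω) (M : Matrix (Fin r) (Fin r) Ω) :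
    A.mpd (A.mpdb M) = - A.mpdb (A.mpd M) := by
  ext i j
  simpa [mpd, mpdb] using eq_neg_of_add_eq_zero_left (A.pd_pdb (M i j))

theorem mpd_sub (A : DolbeaultAlgebra Ω) (M N : Matrix (Fin r) (Fin r) Ω) :
    A.mpd (M - N) = A.mpd M - A.mpd N := by
  ext i j
  simp [mpd]

theorem mpdb_neg (A : DolbeaultAlgebra Ω) (M : Matrix (Fin r) (Fin r) Ω) :
    A.mpdb (-M) = - A.mpdb M := by
  ext i j
  simp [mpdb]

end DolbeaultAlgebra

/-- `Tr(BθBΘ²) = ∂((1/2)Tr(BθBΘBθ̄ - Bθ̄BΘBθ)) - (1/2)Tr(Bθ²BΘBθ̄ + Bθ̄BΘBθ²)`. -/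
theorem stmt7
    (A : DolbeaultAlgebra Ω) (r : ℕ) (hr : 1 ≤ r)
    (h hinv : Matrix (Fin r) (Fin r) Ω)
    (hdeg : A.MatDeg 0 0 h) (hinvdeg : A.MatDeg 0 0 hinv)
    (hinvl : hinv * h = 1) (hinvr : h * hinv = 1)
    (Bθ Bθb BΘ : Matrix (Fin r) (Fin r) Ω)
    (hBθ : Bθ = hinv * A.mpd h) (hBθb : Bθb = hinv * A.mpdb h) (hBΘ : BΘ = A.mpdb Bθ) :
    Matrix.trace (Bθ * BΘ ^ 2) =
      A.pd ((1 / 2 : ℂ) • Matrix.trace (Bθ * BΘ * Bθb - Bθb * BΘ * Bθ))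
      - (1 / 2 : ℂ) • Matrix.trace (Bθ ^ 2 * BΘ * Bθb + Bθb * BΘ * Bθ ^ 2) := by
  have dθ : A.MatDeg 1 0 Bθ := by
    rw [hBθ]; exact hinvdeg.mul' fun i j => A.pd_mem (hdeg i j)
  have db : A.MatDeg 0 1 Bθb := by
    rw [hBθb]; exact hinvdeg.mul' fun i j => A.pdb_mem (hdeg i j)
  have dΘ : A.MatDeg 1 1 BΘ := by
    rw [hBΘ]; exact fun i j => A.pdb_mem (dθ i j)
  -- derivatives of the inverse
  have e1 : A.mpd hinv = - (Bθ * hinv) := by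
    have h1 := A.mpd_mul hinvdeg h
    rw [hinvl, A.mpd_one] at h1
    simp only [add_zero, pow_zero, one_smul, ← hBθ] at h1
    have h2 : A.mpd hinv * h = - Bθ := eq_neg_of_add_eq_zero_left h1.symm
    calc A.mpd hinv = A.mpd hinv * h * hinv := by rw [mul_assoc, hinvr, mul_one]
      _ = _ := by rw [h2, neg_mul]
  have e2 : A.mpdb hinv = - (Bθb * hinv) := by
    have h1 := A.mpdb_mul hinvdeg h
    rw [hinvl, A.mpdb_one] at h1
    simp only [add_zero, pow_zero, one_smul, ← hBθb] at h1
    have h2 : A.mpdb hinv * h = - Bθb := eq_neg_of_add_eq_zero_left h1.symm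
    calc A.mpdb hinv = A.mpdb hinv * h * hinv := by rw [mul_assoc, hinvr, mul_one]
      _ = _ := by rw [h2, neg_mul]
  have f1 : A.mpd Bθ = - (Bθ * Bθ) := by
    have h1 := A.mpd_mul hinvdeg (A.mpd h)
    rw [← hBθ, e1, A.mpd_mpd, neg_mul, mul_assoc, ← hBθ] at h1
    simpa using h1
  have f2 : BΘ = - (Bθb * Bθ) + hinv * A.mpdb (A.mpd h) := by
    have h1 := A.mpdb_mul hinvdeg (A.mpd h)
    rw [← hBθ, ← hBΘ, e2, neg_mul, mul_assoc, ← hBθ] at h1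
    simpa using h1
  have f3 : A.mpd Bθb = - (Bθ * Bθb) - BΘ - Bθb * Bθ := by
    have h1 := A.mpd_mul hinvdeg (A.mpdb h)
    rw [← hBθb, e1, A.mpd_mpdb, neg_mul, mul_assoc, ← hBθb] at h1
    rw [h1, f2]
    simp only [add_zero, pow_zero, one_smul, mul_neg]
    abel
  have f4 : A.mpd BΘ = BΘ * Bθ - Bθ * BΘ := by
    rw [hBΘ, A.mpd_mpdb, f1, A.mpdb_neg, A.mpdb_mul dθ, neg_neg]
    simp [sub_eq_add_neg]
  have g1 : A.mpd (Bθ * BΘ * Bθb) = Bθ * BΘ ^ 2 + Bθ * BΘ * Bθb * Bθ := by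
    rw [A.mpd_mul (dθ.mul' dΘ), A.mpd_mul dθ, f1, f3, f4]
    norm_num
    noncomm_ring
  have g2 : A.mpd (Bθb * BΘ * Bθ) = - (Bθ * (Bθb * BΘ * Bθ)) - BΘ ^ 2 * Bθ := by
    rw [A.mpd_mul (db.mul' dΘ), A.mpd_mul db, f1, f3, f4]
    norm_num
    noncomm_ring
  have t1 : Matrix.trace (BΘ ^ 2 * Bθ) = Matrix.trace (Bθ * BΘ ^ 2) := by
    rw [pow_two, A.trace_mul_gcomm (dΘ.mul' dΘ) dθ]
    norm_num
  have t2 : Matrix.trace (Bθ * BΘ * Bθb * Bθ) = Matrix.trace (Bθ ^ 2 * BΘ * Bθb) := by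
    rw [A.trace_mul_gcomm ((dθ.mul' dΘ).mul' db) dθ]
    norm_num [pow_two, mul_assoc]
  have t3 : Matrix.trace (Bθ * (Bθb * BΘ * Bθ)) = Matrix.trace (Bθb * BΘ * Bθ ^ 2) := by
    rw [A.trace_mul_gcomm dθ ((db.mul' dΘ).mul' dθ)]
    norm_num [pow_two, mul_assoc]
  rw [map_smul, A.pd_trace, A.mpd_sub, g1, g2]
  simp only [Matrix.trace_sub, Matrix.trace_add, Matrix.trace_neg, t1, t2, t3]
  module
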